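/- arXiv:1709.10037 — 7 statements merged into one kernel-verified Lean document; each statement's English description precedes it below -/
import Mathlib

section
/- Let H be a real M_R × M_T matrix such that S = Hᵀ H is positive definite, let P > 0 satisfy trace(S⁻¹) < P, and let a ∈ ℝ^{M_T} with a ≠ 0. Then SNR_eff(H,a) = (aᵀ (I + P·S)⁻¹ a)⁻¹ ≤ (P / (aᵀ S⁻¹ a)) · Σ_{k=0}^∞ (trace(S⁻¹)/P)^k, where the series on the right converges to 1/(1 − trace(S⁻¹)/P). -/
open Matrix

/-!
Write `S = Hᵀ H`, `t = trace S⁻¹` and `w = (1 + P S)⁻¹ a`, so that `a = w + P S w` and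
`S⁻¹ a = S⁻¹ w + P w`. Then `P (a ⬝ w) = a ⬝ S⁻¹ a - a ⬝ S⁻¹ w`, and the bound reduces to
`P (a ⬝ S⁻¹ w) ≤ t (a ⬝ S⁻¹ a)`. Expanding both sides in `w`, this follows from
`w ⬝ S⁻¹ w ≤ t (w ⬝ w)` and `w ⬝ w ≤ t (w ⬝ S w)`. With `B = H S⁻¹` one has `S⁻¹ = Bᵀ B` and
`w = Bᵀ (H w)`, so both are instances of `|B x|² ≤ trace (Bᵀ B) |x|²`, the comparison of the
operator norm with the Frobenius norm.
-/

/-- The Euclidean operator norm is at most the Frobenius norm, in squared form. -/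
lemma mulVec_dotProduct_self_le {m n : Type*} [Fintype m] [Fintype n]
    (B : Matrix m n ℝ) (x : n → ℝ) :
    (B *ᵥ x) ⬝ᵥ (B *ᵥ x) ≤ (Bᵀ * B).trace * (x ⬝ᵥ x) := by
  have h1 : (Bᵀ * B).trace = ∑ i, ∑ j, B i j ^ 2 := by
    simp only [Matrix.trace, Matrix.diag, Matrix.mul_apply, Matrix.transpose_apply]
    rw [Finset.sum_comm]
    simp only [sq]
  rw [h1, Finset.sum_mul]
  refine Finset.sum_le_sum fun i _ => ?_
  have h := Finset.sum_mul_sq_le_sq_mul_sq Finset.univ (B i) x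
  simpa only [mulVec, dotProduct, sq] using h

/-- For a channel matrix `H` with `S = Hᵀ H` positive definite, power
`P > 0` with `trace(S⁻¹) < P`, and a nonzero coefficient vector `a`, the effective SNR
`(aᵀ (I + P·S)⁻¹ a)⁻¹` is bounded above by `(P / (aᵀ S⁻¹ a)) · Σ_{k≥0} (trace(S⁻¹)/P)^k`,
where the geometric series converges to `1/(1 − trace(S⁻¹)/P)`. -/
theorem effective_SNR_upper_bound {MR MT : ℕ}
    (H : Matrix (Fin MR) (Fin MT) ℝ) (P : ℝ) (hP : 0 < P)
    (hS : (Hᵀ * H).PosDef) (htr : ((Hᵀ * H)⁻¹).trace < P)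
    (a : Fin MT → ℝ) (ha : a ≠ 0) :
    (a ⬝ᵥ ((1 + P • (Hᵀ * H))⁻¹ *ᵥ a))⁻¹ ≤
      (P / (a ⬝ᵥ ((Hᵀ * H)⁻¹ *ᵥ a))) * ∑' k : ℕ, (((Hᵀ * H)⁻¹).trace / P) ^ k ∧
    ∑' k : ℕ, (((Hᵀ * H)⁻¹).trace / P) ^ k = 1 / (1 - ((Hᵀ * H)⁻¹).trace / P) := by
  have ht0 : 0 ≤ ((Hᵀ * H)⁻¹).trace := hS.inv.posSemidef.trace_nonneg
  have hr : ((Hᵀ * H)⁻¹).trace / P < 1 := (div_lt_one hP).2 htr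
  have hsum : ∑' k : ℕ, (((Hᵀ * H)⁻¹).trace / P) ^ k = 1 / (1 - ((Hᵀ * H)⁻¹).trace / P) := by
    rw [one_div]
    exact tsum_geometric_of_lt_one (div_nonneg ht0 hP.le) hr
  refine ⟨?_, hsum⟩
  rw [hsum]
  have hq : 0 < a ⬝ᵥ ((Hᵀ * H)⁻¹ *ᵥ a) := by
    simpa using hS.inv.dotProduct_mulVec_pos ha
  have hSu : IsUnit (Hᵀ * H).det := (Matrix.isUnit_iff_isUnit_det _).1 hS.isUnit
  have hMu : IsUnit (1 + P • (Hᵀ * H)).det :=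
    (Matrix.isUnit_iff_isUnit_det _).1 (Matrix.PosDef.one.add (hS.smul hP)).isUnit
  have hTT : ((Hᵀ * H)⁻¹)ᵀ = (Hᵀ * H)⁻¹ := by
    rw [Matrix.transpose_nonsing_inv, Matrix.transpose_mul, Matrix.transpose_transpose]
  have hTS : (Hᵀ * H)⁻¹ * (Hᵀ * H) = 1 := Matrix.nonsing_inv_mul _ hSu
  have hB : (H * (Hᵀ * H)⁻¹)ᵀ * (H * (Hᵀ * H)⁻¹) = (Hᵀ * H)⁻¹ := by
    rw [Matrix.transpose_mul, hTT, Matrix.mul_assoc, ← Matrix.mul_assoc Hᵀ, ← Matrix.mul_assoc,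
      hTS, Matrix.one_mul]
  set w := (1 + P • (Hᵀ * H))⁻¹ *ᵥ a with hw
  have haw : a = w + P • ((Hᵀ * H) *ᵥ w) := by
    have h : (1 + P • (Hᵀ * H)) *ᵥ w = a := by
      rw [hw, Matrix.mulVec_mulVec, Matrix.mul_nonsing_inv _ hMu, Matrix.one_mulVec]
    rw [← h, Matrix.add_mulVec, Matrix.one_mulVec, Matrix.smul_mulVec]
  clear_value w
  have hBw : (H * (Hᵀ * H)⁻¹)ᵀ *ᵥ (H *ᵥ w) = w := by
    rw [Matrix.transpose_mul, hTT, Matrix.mulVec_mulVec, Matrix.mul_assoc, hTS, Matrix.one_mulVec]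
  have h1 : w ⬝ᵥ ((Hᵀ * H)⁻¹ *ᵥ w) ≤ ((Hᵀ * H)⁻¹).trace * (w ⬝ᵥ w) := by
    have h := mulVec_dotProduct_self_le (H * (Hᵀ * H)⁻¹) w
    rw [hB, Matrix.dotProduct_mulVec, ← Matrix.mulVec_transpose, Matrix.mulVec_mulVec, hB] at h
    rwa [dotProduct_comm]
  have h2 : w ⬝ᵥ w ≤ ((Hᵀ * H)⁻¹).trace * (w ⬝ᵥ ((Hᵀ * H) *ᵥ w)) := by
    have h := mulVec_dotProduct_self_le (H * (Hᵀ * H)⁻¹)ᵀ (H *ᵥ w)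
    rw [hBw, Matrix.transpose_transpose, Matrix.trace_mul_comm, hB, Matrix.dotProduct_mulVec,
      ← Matrix.mulVec_transpose, Matrix.mulVec_mulVec] at h
    rwa [dotProduct_comm w (_ *ᵥ w)]
  have hTa : (Hᵀ * H)⁻¹ *ᵥ a = (Hᵀ * H)⁻¹ *ᵥ w + P • w := by
    conv_lhs => rw [haw]
    rw [Matrix.mulVec_add, Matrix.mulVec_smul, Matrix.mulVec_mulVec, hTS, Matrix.one_mulVec]
  have hSwTw : ((Hᵀ * H) *ᵥ w) ⬝ᵥ ((Hᵀ * H)⁻¹ *ᵥ w) = w ⬝ᵥ w := by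
    rw [Matrix.dotProduct_mulVec, ← Matrix.mulVec_transpose, hTT, Matrix.mulVec_mulVec, hTS,
      Matrix.one_mulVec]
  have e1 : a ⬝ᵥ w = w ⬝ᵥ w + P * (w ⬝ᵥ ((Hᵀ * H) *ᵥ w)) := by
    conv_lhs => rw [haw]
    rw [add_dotProduct, smul_dotProduct, smul_eq_mul, dotProduct_comm (_ *ᵥ w) w]
  have e2 : a ⬝ᵥ ((Hᵀ * H)⁻¹ *ᵥ a) = w ⬝ᵥ ((Hᵀ * H)⁻¹ *ᵥ w) + 2 * P * (w ⬝ᵥ w)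
      + P ^ 2 * (w ⬝ᵥ ((Hᵀ * H) *ᵥ w)) := by
    rw [hTa, dotProduct_add, dotProduct_smul, e1]
    have e3 : a ⬝ᵥ ((Hᵀ * H)⁻¹ *ᵥ w) = w ⬝ᵥ ((Hᵀ * H)⁻¹ *ᵥ w) + P * (w ⬝ᵥ w) := by
      conv_lhs => rw [haw]
      rw [add_dotProduct, smul_dotProduct, smul_eq_mul, hSwTw]
    rw [e3, smul_eq_mul]
    ring
  have n1 : 0 ≤ w ⬝ᵥ ((Hᵀ * H)⁻¹ *ᵥ w) := by
    simpa using hS.inv.posSemidef.dotProduct_mulVec_nonneg w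
  have n2 : 0 ≤ w ⬝ᵥ w := by simpa using dotProduct_star_self_nonneg w
  generalize ((Hᵀ * H)⁻¹).trace = t at *
  generalize w ⬝ᵥ ((Hᵀ * H)⁻¹ *ᵥ w) = x at *
  generalize w ⬝ᵥ w = y at *
  generalize w ⬝ᵥ ((Hᵀ * H) *ᵥ w) = z at *
  generalize a ⬝ᵥ ((Hᵀ * H)⁻¹ *ᵥ a) = q at *
  generalize a ⬝ᵥ w = p at *
  have key : q * (P - t) ≤ p * P ^ 2 := by
    have hk : P * x + P ^ 2 * y ≤ t * q := by
      rw [e2]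
      nlinarith [mul_le_mul_of_nonneg_left h1 hP.le, mul_le_mul_of_nonneg_left h2 (sq_nonneg P),
        mul_nonneg ht0 n1, mul_nonneg (mul_nonneg ht0 hP.le) n2]
    have hpq : P ^ 2 * p = P * q - (P * x + P ^ 2 * y) := by rw [e1, e2]; ring
    linarith
  have hPt : 0 < P - t := sub_pos.2 htr
  have hrhs : P / q * (1 / (1 - t / P)) = (q * (P - t) / P ^ 2)⁻¹ := by
    have : 1 - t / P ≠ 0 := (sub_pos.2 hr).ne'
    field_simp
  rw [hrhs]
  refine inv_anti₀ (by positivity) ?_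
  rw [div_le_iff₀ (by positivity)]
  exact key
end

section
/- Let H be a real M_R × M_T matrix such that S = Hᵀ H is positive definite, let P > 0 satisfy trace(S⁻¹) < P, and let a ∈ ℝ^{M_T} with a ≠ 0. Then 1 ≤ SNR_eff(H,a) / LB(H,a) ≤ 1/(1 − trace(S⁻¹)/P), where SNR_eff(H,a) = (aᵀ (I + P·S)⁻¹ a)⁻¹ and LB(H,a) = P / (aᵀ S⁻¹ a). -/
/-!
Write `S = Hᵀ H`, `t = tr S⁻¹` and `u = (1 + P S)⁻¹ a`, so that `a = u + P S u`. With
`α = uᵀ S⁻¹ u`, `β = uᵀ u`, `γ = uᵀ S u`, both quadratic forms become polynomials in `P`: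
`aᵀ (1 + P S)⁻¹ a = β + P γ` and `aᵀ S⁻¹ a = α + 2 P β + P² γ`.
The lower bound says `P (β + P γ) ≤ α + 2 P β + P² γ`, which is clear. The upper bound reduces to
`P α + P² β ≤ t (α + 2 P β + P² γ)`, which follows from `α ≤ t β` and `β ≤ t γ`. The first of these
is `S⁻¹ ≤ (tr S⁻¹) I` (`dotProduct_mulVec_le_trace_mul`); the second follows from it and
nonnegativity of the `S⁻¹`-form at `u - t S u`.
-/

open Matrix

open scoped MatrixOrder Matrix.Norms.L2Operator in
/-- A positive semidefinite matrix is dominated by its trace times the identity: for `B = Cᵀ C`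
this is the Cauchy–Schwarz inequality applied to each row of `C`. -/
lemma dotProduct_mulVec_le_trace_mul {n : ℕ} {B : Matrix (Fin n) (Fin n) ℝ}
    (hB : B.PosSemidef) (x : Fin n → ℝ) :
    x ⬝ᵥ (B *ᵥ x) ≤ B.trace * (x ⬝ᵥ x) := by
  obtain ⟨C, rfl⟩ := CStarAlgebra.nonneg_iff_eq_star_mul_self.mp hB.nonneg
  have h1 : x ⬝ᵥ ((star C * C) *ᵥ x) = ∑ i, (∑ j, C i j * x j) ^ 2 := by
    rw [star_eq_conjTranspose, conjTranspose_eq_transpose_of_trivial, ← mulVec_mulVec,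
      dotProduct_mulVec, vecMul_transpose]
    simp [dotProduct, mulVec, sq]
  have h2 : (star C * C).trace = ∑ i, ∑ j, C i j ^ 2 := by
    rw [star_eq_conjTranspose, conjTranspose_eq_transpose_of_trivial, Finset.sum_comm]
    simp [trace, mul_apply, sq]
  have h3 : x ⬝ᵥ x = ∑ j, x j ^ 2 := by simp [dotProduct, sq]
  rw [h1, h2, h3, Finset.sum_mul]
  exact Finset.sum_le_sum fun i _ => Finset.sum_mul_sq_le_sq_mul_sq _ _ _

/-- For a channel matrix `H` with `S = Hᵀ H` positive definite, power
`P > 0` with `trace(S⁻¹) < P`, and a nonzero coefficient vector `a`,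
`1 ≤ SNR_eff(H,a) / LB(H,a) ≤ 1/(1 − trace(S⁻¹)/P)`, where
`SNR_eff(H,a) = (aᵀ (I + P·S)⁻¹ a)⁻¹` and `LB(H,a) = P / (aᵀ S⁻¹ a)`. -/
theorem effective_SNR_ratio_bounds {MR MT : ℕ}
    (H : Matrix (Fin MR) (Fin MT) ℝ) (P : ℝ) (hP : 0 < P)
    (hS : (Hᵀ * H).PosDef) (htr : ((Hᵀ * H)⁻¹).trace < P)
    (a : Fin MT → ℝ) (ha : a ≠ 0) :
    1 ≤ (a ⬝ᵥ ((1 + P • (Hᵀ * H))⁻¹ *ᵥ a))⁻¹ / (P / (a ⬝ᵥ ((Hᵀ * H)⁻¹ *ᵥ a))) ∧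
    (a ⬝ᵥ ((1 + P • (Hᵀ * H))⁻¹ *ᵥ a))⁻¹ / (P / (a ⬝ᵥ ((Hᵀ * H)⁻¹ *ᵥ a))) ≤
      1 / (1 - ((Hᵀ * H)⁻¹).trace / P) := by
  generalize Hᵀ * H = S at *
  have hM : (1 + P • S).PosDef := PosDef.one.add (hS.smul hP)
  have hI : (S⁻¹).PosDef := hS.inv
  have hSu : IsUnit S.det := hS.det_pos.ne'.isUnit
  have hMu : IsUnit (1 + P • S).det := hM.det_pos.ne'.isUnit
  have hq : 0 < a ⬝ᵥ ((1 + P • S)⁻¹ *ᵥ a) := by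
    simpa using hM.inv.dotProduct_mulVec_pos ha
  have hr : 0 < a ⬝ᵥ (S⁻¹ *ᵥ a) := by simpa using hI.dotProduct_mulVec_pos ha
  have : Nonempty (Fin MT) := by
    obtain ⟨i, -⟩ := Function.ne_iff.mp ha
    exact ⟨i⟩
  have ht : 0 < (S⁻¹).trace := hI.trace_pos
  set u := (1 + P • S)⁻¹ *ᵥ a with hu
  have hau : a = u + P • (S *ᵥ u) := by
    have : (1 + P • S) *ᵥ u = a := by
      rw [hu, mulVec_mulVec, mul_nonsing_inv _ hMu, one_mulVec]
    rw [← this, add_mulVec, one_mulVec, smul_mulVec]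
  have hSS : S⁻¹ *ᵥ (S *ᵥ u) = u := by
    rw [mulVec_mulVec, nonsing_inv_mul _ hSu, one_mulVec]
  have hsym : (S *ᵥ u) ⬝ᵥ (S⁻¹ *ᵥ u) = u ⬝ᵥ u := by
    have hT : (S⁻¹)ᵀ = S⁻¹ := by
      simpa [conjTranspose_eq_transpose_of_trivial] using hI.isHermitian.eq
    rw [dotProduct_mulVec, ← mulVec_transpose, hT, hSS]
  -- The `S⁻¹`-form on the line `u + c S u`; used at `c = P` (giving `a`) and at `c = -tr S⁻¹`.
  have hform : ∀ c : ℝ, (u + c • (S *ᵥ u)) ⬝ᵥ (S⁻¹ *ᵥ (u + c • (S *ᵥ u))) =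
      u ⬝ᵥ (S⁻¹ *ᵥ u) + 2 * c * (u ⬝ᵥ u) + c ^ 2 * (u ⬝ᵥ (S *ᵥ u)) := by
    intro c
    simp only [mulVec_add, mulVec_smul, hSS, add_dotProduct, dotProduct_add, smul_dotProduct,
      dotProduct_smul, hsym, smul_eq_mul, dotProduct_comm (S *ᵥ u) u]
    ring
  have hqe : a ⬝ᵥ u = u ⬝ᵥ u + P * (u ⬝ᵥ (S *ᵥ u)) := by
    conv_lhs => rw [hau]
    simp [add_dotProduct, dotProduct_comm (S *ᵥ u) u]
  have hre : a ⬝ᵥ (S⁻¹ *ᵥ a) =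
      u ⬝ᵥ (S⁻¹ *ᵥ u) + 2 * P * (u ⬝ᵥ u) + P ^ 2 * (u ⬝ᵥ (S *ᵥ u)) := by
    rw [← hform P, ← hau]
  have hα : 0 ≤ u ⬝ᵥ (S⁻¹ *ᵥ u) := by simpa using hI.posSemidef.dotProduct_mulVec_nonneg u
  have hβ : 0 ≤ u ⬝ᵥ u := by simpa using dotProduct_star_self_nonneg u
  have hαβ := dotProduct_mulVec_le_trace_mul hI.posSemidef u
  have hβγ : u ⬝ᵥ u ≤ (S⁻¹).trace * (u ⬝ᵥ (S *ᵥ u)) := by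
    have h := hI.posSemidef.dotProduct_mulVec_nonneg (u + (-(S⁻¹).trace) • (S *ᵥ u))
    rw [star_trivial, hform] at h
    refine le_of_mul_le_mul_left ?_ ht
    linarith
  clear_value u
  rw [hre] at hr ⊢
  rw [hqe] at hq ⊢
  generalize u ⬝ᵥ (S⁻¹ *ᵥ u) = α at *
  generalize u ⬝ᵥ (S *ᵥ u) = γ at *
  generalize u ⬝ᵥ u = β at *
  generalize (S⁻¹).trace = t at *
  have key : (β + P * γ)⁻¹ / (P / (α + 2 * P * β + P ^ 2 * γ)) =
      (α + 2 * P * β + P ^ 2 * γ) / (P * (β + P * γ)) := by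
    field_simp
  have hPt : 1 / (1 - t / P) = P / (P - t) := by
    have : P - t ≠ 0 := (sub_pos.mpr htr).ne'
    field_simp
  rw [key, hPt]
  constructor
  · rw [le_div_iff₀ (by positivity)]
    linarith [mul_nonneg hP.le hβ]
  · rw [div_le_div_iff₀ (by positivity) (sub_pos.mpr htr)]
    have h1 := mul_le_mul_of_nonneg_left hαβ hP.le
    have h2 := mul_le_mul_of_nonneg_left hβγ (sq_nonneg P)
    linarith [mul_nonneg ht.le hα, mul_nonneg ht.le (mul_nonneg hP.le hβ)]
end

section
/- Let H be a real M_R × M_T matrix such that S = Hᵀ H is positive definite, and let a ∈ ℝ^{M_T} with a ≠ 0. Then the ratio SNR_eff(H,a) / LB(H,a) = (aᵀ (I + P·S)⁻¹ a)⁻¹ · (aᵀ S⁻¹ a) / P tends to 1 as the transmission power P tends to infinity; that is, the lower and upper bounds on the effective SNR become tight as P → ∞. -/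
open Matrix Filter

/-!
For `P > 0` one has `(1 + P • S)⁻¹ = P⁻¹ • (P⁻¹ • 1 + S)⁻¹`, so the factor `P` cancels and the
ratio equals `(aᵀ (P⁻¹ • 1 + S)⁻¹ a)⁻¹ * (aᵀ S⁻¹ a)`. As `P → ∞` the matrix `P⁻¹ • 1 + S` tends
to `S`; matrix inversion is continuous at the invertible matrix `S`, and `aᵀ S⁻¹ a > 0`, so the
limit is `1`.
-/

theorem inv_one_add_smul_eq {n : ℕ} {S : Matrix (Fin n) (Fin n) ℝ} (hS : S.PosDef)
    {P : ℝ} (hP : 0 < P) : (1 + P • S)⁻¹ = P⁻¹ • (P⁻¹ • 1 + S)⁻¹ := by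
  have hpd : (P⁻¹ • (1 : Matrix (Fin n) (Fin n) ℝ) + S).PosDef :=
    (PosDef.one.smul (inv_pos.mpr hP)).add hS
  have hdet : IsUnit (P⁻¹ • (1 : Matrix (Fin n) (Fin n) ℝ) + S).det :=
    (isUnit_iff_isUnit_det _).mp hpd.isUnit
  have heq : 1 + P • S = P • (P⁻¹ • (1 : Matrix (Fin n) (Fin n) ℝ) + S) := by
    rw [smul_add, smul_smul, mul_inv_cancel₀ hP.ne', one_smul]
  rw [heq]
  apply inv_eq_right_inv
  rw [smul_mul_smul_comm, mul_inv_cancel₀ hP.ne', mul_nonsing_inv _ hdet, one_smul]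

/-- For a channel matrix `H` with `S = Hᵀ H` positive definite and a
nonzero coefficient vector `a`, the ratio
`SNR_eff(H,a) / LB(H,a) = (aᵀ (I + P·S)⁻¹ a)⁻¹ · (aᵀ S⁻¹ a) / P` tends to `1`
as the transmission power `P → ∞`: the lower and upper bounds become tight. -/
theorem effective_SNR_ratio_tendsto_one {MR MT : ℕ}
    (H : Matrix (Fin MR) (Fin MT) ℝ)
    (hS : (Hᵀ * H).PosDef) (a : Fin MT → ℝ) (ha : a ≠ 0) :
    Tendsto (fun P : ℝ =>
        (a ⬝ᵥ ((1 + P • (Hᵀ * H))⁻¹ *ᵥ a))⁻¹ * (a ⬝ᵥ ((Hᵀ * H)⁻¹ *ᵥ a)) / P)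
      atTop (nhds 1) := by
  generalize Hᵀ * H = S at hS
  have hpos : 0 < a ⬝ᵥ (S⁻¹ *ᵥ a) := by
    simpa using hS.inv.dotProduct_mulVec_pos ha
  have hdet : S.det ≠ 0 := ((isUnit_iff_isUnit_det _).mp hS.isUnit).ne_zero
  have hcont : ContinuousAt (Inv.inv : Matrix (Fin MT) (Fin MT) ℝ → _) S := by
    refine continuousAt_matrix_inv S ?_
    rw [Ring.inverse_eq_inv']
    exact continuousAt_inv₀ hdet
  have hlim : Tendsto (fun P : ℝ => P⁻¹ • (1 : Matrix (Fin MT) (Fin MT) ℝ) + S)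
      atTop (nhds S) := by
    simpa using ((tendsto_inv_atTop_zero (𝕜 := ℝ)).smul_const
      (1 : Matrix (Fin MT) (Fin MT) ℝ)).add_const S
  have hquad : Continuous fun M : Matrix (Fin MT) (Fin MT) ℝ => a ⬝ᵥ (M *ᵥ a) := by
    fun_prop
  have hq : Tendsto (fun P : ℝ =>
      a ⬝ᵥ ((P⁻¹ • (1 : Matrix (Fin MT) (Fin MT) ℝ) + S)⁻¹ *ᵥ a))
      atTop (nhds (a ⬝ᵥ (S⁻¹ *ᵥ a))) :=
    (hquad.tendsto _).comp (hcont.tendsto.comp hlim)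
  have hr := (hq.inv₀ hpos.ne').mul_const (a ⬝ᵥ (S⁻¹ *ᵥ a))
  rw [inv_mul_cancel₀ hpos.ne'] at hr
  refine hr.congr' ?_
  filter_upwards [eventually_gt_atTop 0] with P hP
  rw [inv_one_add_smul_eq hS hP, smul_mulVec, dotProduct_smul, smul_eq_mul, mul_inv, inv_inv,
    mul_assoc, mul_div_cancel_left₀ _ hP.ne']
end

section
/- Let 2 ≤ M_T ≤ M_R be natural numbers, let P > 0, let μ be the probability measure on real M_R × M_T matrices under which all entries are i.i.d. standard normal random variables, and let a ∈ ℝ^{M_T} be a fixed nonzero vector. Then the pushforward of μ under the map H ↦ LB(H,a) = P / (aᵀ (Hᵀ H)⁻¹ a) is the gamma distribution with shape parameter (M_R − M_T + 1)/2 and rate parameter ‖a‖²/(2P) (equivalently, scale parameter 2P/‖a‖²). -/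
open Matrix MeasureTheory ProbabilityTheory

/-!
The law of `H` is invariant under applying an orthogonal matrix to every row. With a Householder
reflection taking `a` to `‖a‖ e₀`, the quadratic form `aᵀ S⁻¹ a` becomes `‖a‖² (S⁻¹)₀₀`
(`exists_rotation`, `inv_gram_rotate`), so it suffices to find the law of `1 / (S⁻¹)₀₀`.

This number is the squared norm of the projection of column `0` of `H` onto the orthogonal
complement of the other columns (`inv_gram_zero_zero_mul`). The columns are independent
(`measurePreserving_split`), and the other `M_T - 1` columns are almost surely linearly independent
(`ae_det_gram_ne_zero`). Conditionally on them, the projection is a standard Gaussian vector in a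
space of dimension `M_R - M_T + 1` (`map_normSq_proj`), and its squared norm has the required gamma
law by comparison of moment generating functions (`map_sum_sq_gaussian`). The conditional law does
not depend on the conditioning columns, so it is the unconditional law.
-/

/-! ### Gamma laws from Gaussian vectors -/

/-- For `t ≥ r` the integrand on the right is not integrable and both sides are the junk value `0`. -/
lemma mgf_gammaMeasure_integrand {k r : ℝ} (hk : 0 < k) (hr : 0 < r) (t : ℝ) :
    mgf id (gammaMeasure k r) t =
      r ^ k / Real.Gamma k * ∫ x in Set.Ioi (0 : ℝ), x ^ (k - 1) * Real.exp (-((r - t) * x)) := by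
  rw [mgf, gammaMeasure, integral_withDensity_eq_integral_toReal_smul
    (by unfold gammaPDF; fun_prop) (ae_of_all _ fun _ => by simp [gammaPDF])]
  have h1 : ∀ x : ℝ, (gammaPDF k r x).toReal • Real.exp (t * id x)
      = (Set.Ici (0 : ℝ)).indicator (fun x : ℝ => (r ^ k / Real.Gamma k) *
        (x ^ (k - 1) * Real.exp (-((r - t) * x)))) x := by
    intro x
    by_cases hx : 0 ≤ x
    · rw [gammaPDF_of_nonneg hx, ENNReal.toReal_ofReal (by positivity),
        Set.indicator_of_mem (by simpa using hx), smul_eq_mul,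
        show -((r - t) * x) = -(r * x) + t * x by ring, Real.exp_add]
      simp only [id]
      ring
    · rw [gammaPDF_of_neg (not_le.1 hx), Set.indicator_of_notMem (by simpa using hx)]
      simp
  simp_rw [h1]
  rw [integral_indicator measurableSet_Ici, integral_Ici_eq_integral_Ioi, integral_const_mul]

lemma mgf_gammaMeasure_of_lt {k r t : ℝ} (hk : 0 < k) (hr : 0 < r) (ht : t < r) :
    mgf id (gammaMeasure k r) t = (r / (r - t)) ^ k := by
  have h0 : 0 < r - t := sub_pos.2 ht
  rw [mgf_gammaMeasure_integrand hk hr, Real.integral_rpow_mul_exp_neg_mul_Ioi hk h0,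
    Real.div_rpow hr.le h0.le, Real.div_rpow zero_le_one h0.le, Real.one_rpow]
  have := (Real.Gamma_pos_of_pos hk).ne'
  field_simp

/-- Beyond the rate the moment generating function is an integral of a non-integrable function,
hence the junk value `0`. -/
lemma mgf_gammaMeasure_of_le {k r t : ℝ} (hk : 0 < k) (hr : 0 < r) (ht : r ≤ t) :
    mgf id (gammaMeasure k r) t = 0 := by
  rw [mgf_gammaMeasure_integrand hk hr, integral_undef, mul_zero]
  intro h
  refine not_integrableOn_Ioi_rpow (k - 1) (h.mono' (by fun_prop) ?_)
  filter_upwards [ae_restrict_mem measurableSet_Ioi] with x hx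
  have hx' : 0 < x := hx
  rw [Real.norm_of_nonneg (by positivity)]
  refine le_mul_of_one_le_right (by positivity) (Real.one_le_exp ?_)
  nlinarith

/-- Valid for every `t`: when `1 ≤ 2 * c * t` the integral diverges and both sides are `0`. -/
lemma mgf_sq_gaussianReal (c t : ℝ) :
    ∫ x, Real.exp (t * (c * x ^ 2)) ∂(gaussianReal 0 1) = √(1 / (1 - 2 * (c * t))) := by
  rw [integral_gaussianReal_eq_integral_smul one_ne_zero]
  have h1 : ∀ x : ℝ, gaussianPDFReal 0 1 x • Real.exp (t * (c * x ^ 2)) =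
      (√(2 * Real.pi))⁻¹ * Real.exp (-((1 / 2) - c * t) * x ^ 2) := by
    intro x
    rw [gaussianPDFReal, smul_eq_mul, mul_assoc, ← Real.exp_add]
    simp
    left
    ring
  simp_rw [h1]
  rw [integral_const_mul, integral_gaussian, ← Real.sqrt_inv, ← Real.sqrt_mul (by positivity)]
  congr 1
  have := Real.pi_pos.ne'
  rw [show (1 : ℝ) / 2 - c * t = (1 - 2 * (c * t)) / 2 by ring]
  generalize 1 - 2 * (c * t) = q
  rw [div_div_eq_mul_div, mul_comm Real.pi 2, ← mul_div_assoc, inv_mul_cancel₀ (by positivity)]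

/-- A scaled chi-squared law is a gamma law. The two moment generating functions agree everywhere
(with common junk value `0` from the rate `1 / (2 * c)` on), and that of the gamma law is finite near
`0`, so the characteristic functions agree. -/
lemma map_sum_sq_gaussian {d : ℕ} (hd : 0 < d) {c : ℝ} (hc : 0 < c) :
    (Measure.pi fun _ : Fin d => gaussianReal 0 1).map (fun x => c * ∑ i, x i ^ 2) =
      gammaMeasure (d / 2) (1 / (2 * c)) := by
  have hk : (0 : ℝ) < d / 2 := by positivity
  have hr : 0 < 1 / (2 * c) := by positivity
  have := isProbabilityMeasure_gammaMeasure hk hr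
  set μ := Measure.pi fun _ : Fin d => gaussianReal 0 1
  set X : (Fin d → ℝ) → ℝ := fun x => c * ∑ i, x i ^ 2
  have hX : Measurable X := by fun_prop
  have : IsProbabilityMeasure (μ.map X) := Measure.isProbabilityMeasure_map hX.aemeasurable
  have hmgf : mgf id (gammaMeasure (d / 2) (1 / (2 * c))) = mgf id (μ.map X) := by
    ext t
    have h1 : mgf id (μ.map X) t = √(1 / (1 - 2 * (c * t))) ^ d := by
      rw [mgf_id_map hX.aemeasurable, mgf]
      simp_rw [X, Finset.mul_sum, Real.exp_sum]
      rw [integral_fintype_prod_eq_prod (𝕜 := ℝ)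
        (f := fun (_ : Fin d) (x : ℝ) => Real.exp (t * (c * x ^ 2)))]
      simp [mgf_sq_gaussianReal]
    rw [h1]
    rcases lt_or_ge t (1 / (2 * c)) with ht | ht
    · have h2 : 0 < 1 - 2 * (c * t) := by
        rw [lt_div_iff₀ (by positivity)] at ht
        linarith
      rw [mgf_gammaMeasure_of_lt hk hr ht, Real.sqrt_eq_rpow, ← Real.rpow_natCast,
        ← Real.rpow_mul (by positivity)]
      congr 1
      · have : 1 / (2 * c) - t ≠ 0 := (sub_pos.2 ht).ne'
        field_simp
      · ring
    · have h2 : 1 - 2 * (c * t) ≤ 0 := by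
        rw [div_le_iff₀ (by positivity)] at ht
        linarith
      rw [mgf_gammaMeasure_of_le hk hr ht, Real.sqrt_eq_zero_of_nonpos
        (div_nonpos_of_nonneg_of_nonpos zero_le_one h2), zero_pow hd.ne']
  have hsub : Set.Iio (1 / (2 * c)) ⊆
      integrableExpSet id (gammaMeasure (d / 2) (1 / (2 * c))) := by
    intro t ht
    refine Integrable.of_integral_ne_zero ?_
    change mgf id _ t ≠ 0
    rw [mgf_gammaMeasure_of_lt hk hr ht]
    have : 0 < 1 / (2 * c) - t := sub_pos.2 ht
    positivity
  have hEq := eqOn_complexMGF_of_mgf hmgf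
  refine (Measure.ext_of_charFun ?_).symm
  ext t
  rw [← complexMGF_id_mul_I, ← complexMGF_id_mul_I]
  refine hEq ?_
  have h0 : (0 : ℝ) ∈ interior (Set.Iio (1 / (2 * c))) := by
    rw [isOpen_Iio.interior_eq]
    exact hr
  simpa using interior_mono hsub h0

/-- The orthogonal projection of a standard Gaussian vector to `W` is a standard Gaussian vector of
`W`, so its squared norm is a chi-squared variable with `dim W` degrees of freedom. -/
lemma map_normSq_proj {E : Type*} [NormedAddCommGroup E] [InnerProductSpace ℝ E]
    [FiniteDimensional ℝ E] [MeasurableSpace E] [BorelSpace E] (W : Submodule ℝ E)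
    (hd : 0 < Module.finrank ℝ W) {c : ℝ} (hc : 0 < c) :
    (stdGaussian E).map (fun x => c * ‖W.orthogonalProjectionOnto x‖ ^ 2) =
      gammaMeasure ((Module.finrank ℝ W : ℝ) / 2) (1 / (2 * c)) := by
  have h1 : (stdGaussian E).map W.orthogonalProjectionOnto = stdGaussian W := by
    have : IsProbabilityMeasure ((stdGaussian E).map W.orthogonalProjectionOnto) :=
      Measure.isProbabilityMeasure_map (by fun_prop)
    refine Measure.ext_of_charFun ?_
    ext t
    rw [charFun_stdGaussian, charFun_apply, integral_map (by fun_prop) (by fun_prop)]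
    simp_rw [Submodule.inner_orthogonalProjectionOnto_eq_of_mem_right]
    have := charFun_stdGaussian (t : E)
    rw [charFun_apply] at this
    simpa using this
  have h2 : (fun x : E => c * ‖W.orthogonalProjectionOnto x‖ ^ 2) =
      (fun w : W => c * ‖w‖ ^ 2) ∘ W.orthogonalProjectionOnto := rfl
  rw [h2, ← Measure.map_map (by fun_prop) (by fun_prop), h1, stdGaussian,
    Measure.map_map (by fun_prop) (by fun_prop), ← map_sum_sq_gaussian hd hc]
  congr 1
  ext x
  simp only [Function.comp]
  congr 1
  rw [← (stdOrthonormalBasis ℝ W).repr.norm_map, EuclideanSpace.real_norm_sq_eq]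
  refine Finset.sum_congr rfl fun i _ => ?_
  congr 1
  simp [map_sum, Pi.single_apply]

/-! ### Gram matrices and projections -/

/-- The `j`-th column of the matrix with rows `H r`, as a vector of Euclidean space. -/
noncomputable def euclCol {n m : ℕ} (H : Fin n → Fin m → ℝ) (j : Fin m) :
    EuclideanSpace ℝ (Fin n) :=
  WithLp.toLp 2 fun r => H r j

/-- The orthogonal complement of the span of the columns of `K`. -/
noncomputable def colPerp {n m : ℕ} (K : Fin n → Fin m → ℝ) :
    Submodule ℝ (EuclideanSpace ℝ (Fin n)) :=
  (Submodule.span ℝ (Set.range (euclCol K)))ᗮ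

lemma gram_apply {n m : ℕ} (H : Fin n → Fin m → ℝ) (i j : Fin m) :
    ((of H)ᵀ * of H) i j = inner ℝ (euclCol H i) (euclCol H j) := by
  simp [Matrix.mul_apply, euclCol, PiLp.inner_apply, mul_comm]

lemma det_gram_ne_zero_iff {n m : ℕ} (H : Fin n → Fin m → ℝ) :
    ((of H)ᵀ * of H).det ≠ 0 ↔ LinearIndependent ℝ (euclCol H) := by
  have h1 : LinearIndependent ℝ (euclCol H) ↔ Function.Injective (of H).mulVec := by
    rw [Matrix.mulVec_injective_iff, ← LinearMap.linearIndependent_iff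
      (WithLp.linearEquiv 2 ℝ (Fin n → ℝ)).toLinearMap (LinearEquiv.ker _)]
    rfl
  rw [h1]
  constructor
  · intro h
    rw [← isUnit_iff_ne_zero, ← Matrix.isUnit_iff_isUnit_det,
      ← Matrix.mulVec_injective_iff_isUnit] at h
    intro x y hxy
    apply h
    simp only [← Matrix.mulVec_mulVec] at *
    rw [hxy]
  · intro h
    have := PosDef.conjTranspose_mul_self (of H) h
    rw [conjTranspose_eq_transpose_of_trivial] at this
    exact this.det_pos.ne'

/-- If the columns of `H` are independent, then `1 / (S⁻¹)₀₀`, for `S = Hᵀ H`, is the squared distance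
of column `0` to the span of the others. The first column of `S⁻¹` gives a combination `y` of the
columns dual to column `0`: it is orthogonal to the others and has inner product `1` with column
`0`. Hence `y` is `(S⁻¹)₀₀` times the projection of column `0`. -/
lemma inv_gram_zero_zero_mul {n m : ℕ} (H : Fin n → Fin (m + 1) → ℝ)
    (h : ((of H)ᵀ * of H).det ≠ 0) :
    ((of H)ᵀ * of H)⁻¹ 0 0 *
      ‖(colPerp fun r j => H r j.succ).orthogonalProjectionOnto (euclCol H 0)‖ ^ 2 = 1 := by
  set S := (of H)ᵀ * of H with hS
  set W := colPerp fun r j => H r (Fin.succ j) with hW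
  set y := ∑ j, S⁻¹ j 0 • euclCol H j with hy
  have h1 : ∀ i, inner ℝ (euclCol H i) y = (1 : Matrix (Fin (m + 1)) (Fin (m + 1)) ℝ) i 0 := by
    intro i
    rw [← Matrix.mul_nonsing_inv S (isUnit_iff_ne_zero.2 h), Matrix.mul_apply, hy, inner_sum]
    refine Finset.sum_congr rfl fun j _ => ?_
    rw [inner_smul_right, hS, gram_apply, mul_comm]
  have hyW : y ∈ W := by
    rw [hW, colPerp, Submodule.mem_orthogonal]
    intro u hu
    induction hu using Submodule.span_induction with
    | mem x hx =>
      obtain ⟨j, rfl⟩ := hx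
      exact (h1 j.succ).trans (by simp)
    | zero => simp
    | add x z _ _ hx hz => rw [inner_add_left, hx, hz, add_zero]
    | smul a x _ hx => rw [inner_smul_left, hx, mul_zero]
  have h2 : W.starProjection y = S⁻¹ 0 0 • W.starProjection (euclCol H 0) := by
    rw [hy, Fin.sum_univ_succ, map_add, map_smul, map_sum, Finset.sum_eq_zero, add_zero]
    intro j _
    rw [map_smul, (Submodule.starProjection_apply_eq_zero_iff W).2, smul_zero]
    exact Submodule.le_orthogonal_orthogonal _ (Submodule.subset_span ⟨j, rfl⟩)
  have h3 : inner ℝ (euclCol H 0) (W.starProjection (euclCol H 0)) =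
      ‖W.orthogonalProjectionOnto (euclCol H 0)‖ ^ 2 := by
    rw [Submodule.starProjection_apply, ← Submodule.inner_orthogonalProjectionOnto_eq_of_mem_right,
      real_inner_self_eq_norm_sq]
  have h4 := h1 0
  rw [← Submodule.starProjection_eq_self_iff.2 hyW, h2, inner_smul_right, h3] at h4
  simpa using h4

lemma measurable_inv_gram {n m : ℕ} (i j : Fin m) :
    Measurable fun H : Fin n → Fin m → ℝ => ((of H)ᵀ * of H)⁻¹ i j := by
  have hS : Continuous fun H : Fin n → Fin m → ℝ => (of H)ᵀ * of H :=
    Continuous.matrix_mul (Continuous.matrix_transpose continuous_id) continuous_id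
  simp only [Matrix.inv_def, Ring.inverse_eq_inv', Matrix.smul_apply, smul_eq_mul]
  exact hS.matrix_det.measurable.inv.mul (hS.matrix_adjugate.matrix_elem i j).measurable

/-- In a matrix with i.i.d. standard normal entries, column `0` is independent of the other columns. -/
lemma measurePreserving_split (n m : ℕ) :
    MeasurePreserving (fun H : Fin n → Fin (m + 1) → ℝ => (fun r => H r 0, fun r j => H r (Fin.succ j)))
      (Measure.pi fun _ => Measure.pi fun _ => gaussianReal 0 1)
      ((Measure.pi fun _ => gaussianReal 0 1).prod
        (Measure.pi fun _ => Measure.pi fun _ => gaussianReal 0 1)) := by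
  have h1 := measurePreserving_pi (ι := Fin n) _ _ fun _ : Fin n =>
    measurePreserving_piFinSuccAbove (fun _ : Fin (m + 1) => gaussianReal 0 1) 0
  exact (measurePreserving_arrowProdEquivProdArrow ℝ (Fin m → ℝ) (Fin n) (fun _ => gaussianReal 0 1)
    (fun _ => Measure.pi fun _ => gaussianReal 0 1)).comp h1

lemma finrank_colPerp {n m : ℕ} {K : Fin n → Fin m → ℝ} (h : ((of K)ᵀ * of K).det ≠ 0) :
    m + Module.finrank ℝ (colPerp K) = n := by
  unfold colPerp
  have h1 := (Submodule.span ℝ (Set.range (euclCol K))).finrank_add_finrank_orthogonal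
  rw [finrank_span_eq_card ((det_gram_ne_zero_iff K).1 h)] at h1
  simpa using h1

/-- For fixed `K` of full column rank, the squared distance of a standard Gaussian vector to the
column span of `K`, scaled by `c`, is gamma distributed. -/
lemma map_normSq_colPerp {n m : ℕ} (hmn : m < n) {K : Fin n → Fin m → ℝ}
    (h : ((of K)ᵀ * of K).det ≠ 0) {c : ℝ} (hc : 0 < c) :
    (Measure.pi fun _ : Fin n => gaussianReal 0 1).map
        (fun g => c * ‖(colPerp K).orthogonalProjectionOnto (WithLp.toLp 2 g)‖ ^ 2) =
      gammaMeasure (((n : ℝ) - m) / 2) (1 / (2 * c)) := by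
  have h1 := finrank_colPerp h
  have h2 := map_normSq_proj (colPerp K) (by omega) hc
  rw [← map_pi_eq_stdGaussian, Measure.map_map (by fun_prop) (by fun_prop)] at h2
  have h3 : (Module.finrank ℝ (colPerp K) : ℝ) = n - m := by
    rw [eq_sub_iff_add_eq']
    exact_mod_cast h1
  rw [← h3, ← h2]
  rfl

/-! ### Almost sure full rank -/

/-- The matrix with first column `g` and remaining columns those of `K`. -/
def joinCols {n m : ℕ} (g : Fin n → ℝ) (K : Fin n → Fin m → ℝ) : Fin n → Fin (m + 1) → ℝ :=
  fun r => Fin.cons (g r) (K r)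

lemma joinCols_split {n m : ℕ} (H : Fin n → Fin (m + 1) → ℝ) :
    joinCols (fun r => H r 0) (fun r j => H r (Fin.succ j)) = H :=
  funext fun r => Fin.cons_self_tail (H r)

lemma continuous_joinCols {n m : ℕ} :
    Continuous fun p : (Fin n → ℝ) × (Fin n → Fin m → ℝ) => joinCols p.1 p.2 := by
  refine continuous_pi fun r => continuous_pi fun j => ?_
  refine Fin.cases ?_ (fun j => ?_) j
  · simp only [joinCols, Fin.cons_zero]
    fun_prop
  · simp only [joinCols, Fin.cons_succ]
    fun_prop

/-- Appending a Gaussian column to a matrix of full column rank `m < n` almost surely keeps full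
column rank: the squared distance of the new column to the old ones has a law without atom at `0`. -/
lemma ae_det_gram_joinCols_ne_zero {n m : ℕ} (hmn : m < n) {K : Fin n → Fin m → ℝ}
    (hK : ((of K)ᵀ * of K).det ≠ 0) :
    ∀ᵐ g ∂(Measure.pi fun _ : Fin n => gaussianReal 0 1),
      ((of (joinCols g K))ᵀ * of (joinCols g K)).det ≠ 0 := by
  have h0 : ∀ᵐ x ∂gammaMeasure (((n : ℝ) - m) / 2) (1 / (2 * 1)), x ≠ 0 :=
    (withDensity_absolutelyContinuous volume _).ae_le (Measure.ae_ne volume 0)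
  rw [← map_normSq_colPerp hmn hK one_pos] at h0
  filter_upwards [ae_of_ae_map (by fun_prop) h0] with g hg
  rw [det_gram_ne_zero_iff, linearIndependent_finSucc]
  refine ⟨(det_gram_ne_zero_iff K).1 hK, fun hmem => hg ?_⟩
  have : (colPerp K).orthogonalProjectionOnto (WithLp.toLp 2 g) = 0 :=
    Submodule.orthogonalProjectionOnto_eq_zero_iff.2
      (Submodule.le_orthogonal_orthogonal _ hmem)
  rw [this]
  simp

lemma ae_det_gram_ne_zero (n : ℕ) : ∀ m ≤ n,
    ∀ᵐ H ∂(Measure.pi fun _ : Fin n => Measure.pi fun _ : Fin m => gaussianReal 0 1),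
      ((of H)ᵀ * of H).det ≠ 0 := by
  intro m
  induction m with
  | zero => simp
  | succ m ih =>
    intro hm
    have hmeas : MeasurableSet {p : (Fin n → ℝ) × (Fin n → Fin m → ℝ) |
        ((of (joinCols p.1 p.2))ᵀ * of (joinCols p.1 p.2)).det ≠ 0} := by
      have hM : Continuous fun p : (Fin n → ℝ) × (Fin n → Fin m → ℝ) =>
          of (joinCols p.1 p.2) := continuous_joinCols
      exact (isOpen_ne.preimage (hM.matrix_transpose.matrix_mul hM).matrix_det).measurableSet
    have key : ∀ᵐ p ∂((Measure.pi fun _ : Fin n => gaussianReal 0 1).prod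
        (Measure.pi fun _ : Fin n => Measure.pi fun _ : Fin m => gaussianReal 0 1)),
        ((of (joinCols p.1 p.2))ᵀ * of (joinCols p.1 p.2)).det ≠ 0 := by
      rw [← Measure.prod_swap, ae_map_iff (by fun_prop) hmeas]
      refine (Measure.ae_prod_iff_ae_ae (measurable_swap hmeas)).2 ?_
      filter_upwards [ih (by omega)] with K hK
      exact ae_det_gram_joinCols_ne_zero (by omega) hK
    filter_upwards [(measurePreserving_split n m).quasiMeasurePreserving.ae key] with H hH
    rwa [joinCols_split] at hH

/-! ### Rotation to the first coordinate -/

/-- There is an orthogonal matrix, namely a Householder reflection, taking `a` to `‖a‖ e₀`; like every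
orthogonal matrix it preserves the standard Gaussian measure. -/
lemma exists_rotation {m : ℕ} (a : Fin (m + 1) → ℝ) :
    ∃ A : Matrix (Fin (m + 1)) (Fin (m + 1)) ℝ, Aᵀ * A = 1 ∧
      A *ᵥ a = Pi.single 0 √(a ⬝ᵥ a) ∧
      MeasurePreserving (fun v => A *ᵥ v) (Measure.pi fun _ : Fin (m + 1) => gaussianReal 0 1)
        (Measure.pi fun _ => gaussianReal 0 1) := by
  set u : EuclideanSpace ℝ (Fin (m + 1)) := WithLp.toLp 2 a
  set w : EuclideanSpace ℝ (Fin (m + 1)) := EuclideanSpace.single 0 √(a ⬝ᵥ a)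
  have hn : ‖u‖ = ‖w‖ := by
    rw [PiLp.norm_single, EuclideanSpace.norm_eq, Real.norm_of_nonneg (Real.sqrt_nonneg _)]
    simp [u, dotProduct, sq]
  set Q := (ℝ ∙ (u - w))ᗮ.reflection
  have hQ : Q u = w := Submodule.reflection_sub hn
  set A := LinearMap.toMatrix' ((WithLp.linearEquiv 2 ℝ (Fin (m + 1) → ℝ)).toLinearMap ∘ₗ
    Q.toLinearEquiv.toLinearMap ∘ₗ (WithLp.linearEquiv 2 ℝ (Fin (m + 1) → ℝ)).symm.toLinearMap)
  have hA : ∀ v, A *ᵥ v = WithLp.ofLp (Q (WithLp.toLp 2 v)) := by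
    intro v
    rw [LinearMap.toMatrix'_mulVec]
    rfl
  refine ⟨A, ?_, ?_, ?_⟩
  · have h1 : ∀ v w, (A *ᵥ v) ⬝ᵥ (A *ᵥ w) = v ⬝ᵥ w := by
      intro v w
      have := Q.inner_map_map (WithLp.toLp 2 v) (WithLp.toLp 2 w)
      rw [hA, hA]
      rw [EuclideanSpace.inner_eq_star_dotProduct, EuclideanSpace.inner_eq_star_dotProduct] at this
      rw [dotProduct_comm, dotProduct_comm v]
      exact this
    ext i j
    have := h1 (Pi.single i 1) (Pi.single j 1)
    simpa [Matrix.mul_apply, dotProduct, Matrix.one_apply, Pi.single_apply, eq_comm] using this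
  · rw [hA]
    change WithLp.ofLp (Q u) = _
    rw [hQ]
    rfl
  · refine ⟨by fun_prop, ?_⟩
    have h2 : (fun v => A *ᵥ v) = WithLp.ofLp ∘ Q ∘ WithLp.toLp 2 := funext hA
    rw [h2, ← Measure.map_map (by fun_prop) (by fun_prop),
      ← Measure.map_map (by fun_prop) (by fun_prop), map_pi_eq_stdGaussian, stdGaussian_map,
      ← map_pi_eq_stdGaussian, Measure.map_map (by fun_prop) (by fun_prop)]
    exact Measure.map_id

/-- Applying `A` to each row of `H` replaces `H` by `H Aᵀ`, hence `S⁻¹` by `A S⁻¹ Aᵀ`, which turns the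
quadratic form at `a` into `‖a‖²` times the corner entry. -/
lemma inv_gram_rotate {n m : ℕ} (H : Fin n → Fin (m + 1) → ℝ) (a : Fin (m + 1) → ℝ)
    {A : Matrix (Fin (m + 1)) (Fin (m + 1)) ℝ} (hA : Aᵀ * A = 1)
    (ha : A *ᵥ a = Pi.single 0 √(a ⬝ᵥ a)) :
    a ⬝ᵥ (((of H)ᵀ * of H)⁻¹ *ᵥ a) =
      (a ⬝ᵥ a) * ((of fun r => A *ᵥ H r)ᵀ * of fun r => A *ᵥ H r)⁻¹ 0 0 := by
  have h1 : (of fun r => A *ᵥ H r) = of H * Aᵀ := by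
    ext r j
    simp [Matrix.mul_apply, Matrix.mulVec, dotProduct, mul_comm]
  have hA' : A * Aᵀ = 1 := mul_eq_one_comm.1 hA
  have h2 : ((of H * Aᵀ)ᵀ * (of H * Aᵀ))⁻¹ = A * ((of H)ᵀ * of H)⁻¹ * Aᵀ := by
    rw [Matrix.transpose_mul, Matrix.transpose_transpose, Matrix.mul_assoc, ← Matrix.mul_assoc _ _ Aᵀ,
      Matrix.mul_inv_rev, Matrix.mul_inv_rev, Matrix.inv_eq_right_inv hA', Matrix.inv_eq_right_inv hA]
  have h4 : ∀ M : Matrix (Fin (m + 1)) (Fin (m + 1)) ℝ, a ⬝ᵥ (M *ᵥ a) =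
      (a ⬝ᵥ a) * (A * M * Aᵀ) 0 0 := by
    intro M
    have h5 : a ⬝ᵥ (M *ᵥ a) = (A *ᵥ a) ⬝ᵥ ((A * M * Aᵀ) *ᵥ (A *ᵥ a)) := by
      rw [Matrix.mulVec_mulVec, Matrix.mul_assoc _ _ A, hA, Matrix.mul_one, ← Matrix.mulVec_mulVec,
        Matrix.dotProduct_mulVec (A *ᵥ a), Matrix.vecMul_mulVec, hA, Matrix.vecMul_one]
    rw [h5, ha]
    have h6 : √(a ⬝ᵥ a) * √(a ⬝ᵥ a) = a ⬝ᵥ a :=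
      Real.mul_self_sqrt (Finset.sum_nonneg fun i _ => mul_self_nonneg _)
    rw [single_dotProduct, Matrix.mulVec_single]
    change √(a ⬝ᵥ a) * ((A * M * Aᵀ) 0 0 * √(a ⬝ᵥ a)) = _
    rw [mul_comm ((A * M * Aᵀ) 0 0), ← mul_assoc, h6]
  rw [h1, h2, h4]

/-! ### The law of the lower bound -/

/-- Let `2 ≤ M_T ≤ M_R`, `P > 0`, let `μ` be the law of an `M_R × M_T`
random matrix with i.i.d. standard normal entries, and let `a ∈ ℝ^{M_T}` be a fixed
nonzero vector.  Then the pushforward of `μ` under `H ↦ LB(H,a) = P / (aᵀ (Hᵀ H)⁻¹ a)`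
is the gamma distribution with shape `(M_R − M_T + 1)/2` and rate `‖a‖²/(2P)`
(equivalently scale `2P/‖a‖²`). -/
theorem LB_gamma_distribution (MR MT : ℕ) (hMT : 2 ≤ MT) (hM : MT ≤ MR)
    (P : ℝ) (hP : 0 < P) (a : Fin MT → ℝ) (ha : a ≠ 0) :
    Measure.map
      (fun H : Fin MR → Fin MT → ℝ =>
        P / (a ⬝ᵥ (((Matrix.of H)ᵀ * Matrix.of H)⁻¹ *ᵥ a)))
      (Measure.pi fun _ : Fin MR => Measure.pi fun _ : Fin MT => gaussianReal 0 1) =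
    gammaMeasure (((MR : ℝ) - (MT : ℝ) + 1) / 2) ((a ⬝ᵥ a) / (2 * P)) := by
  obtain ⟨m, rfl⟩ : ∃ m, MT = m + 1 := ⟨MT - 1, by omega⟩
  have hna : 0 < a ⬝ᵥ a := by
    refine lt_of_le_of_ne (Finset.sum_nonneg fun i _ => mul_self_nonneg _) fun h => ha ?_
    exact dotProduct_self_eq_zero.1 h.symm
  obtain ⟨A, hA, hAa, hAmp⟩ := exists_rotation a
  have hrot := measurePreserving_pi (ι := Fin MR) _ _ fun _ : Fin MR => hAmp
  set μ := Measure.pi fun _ : Fin MR => Measure.pi fun _ : Fin (m + 1) => gaussianReal 0 1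
  have hc : 0 < P / (a ⬝ᵥ a) := by positivity
  set c := P / (a ⬝ᵥ a) with hcdef
  set F : (Fin MR → Fin (m + 1) → ℝ) → ℝ := fun H => P / ((a ⬝ᵥ a) * ((of H)ᵀ * of H)⁻¹ 0 0)
    with hFdef
  have hF : Measurable F :=
    measurable_const.div (measurable_const.mul (measurable_inv_gram 0 0))
  have h1 : (fun H : Fin MR → Fin (m + 1) → ℝ => P / (a ⬝ᵥ (((of H)ᵀ * of H)⁻¹ *ᵥ a))) =
      F ∘ fun H r => A *ᵥ H r := by
    ext H
    rw [inv_gram_rotate H a hA hAa]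
    rfl
  have h2 : F = (fun p => F (joinCols p.1 p.2)) ∘
      fun H => (fun r => H r 0, fun r j => H r (Fin.succ j)) :=
    funext fun H => congrArg F (joinCols_split H).symm
  have hsplit := measurePreserving_split MR m
  have hG : Measurable fun p : (Fin MR → ℝ) × (Fin MR → Fin m → ℝ) => F (joinCols p.1 p.2) :=
    hF.comp continuous_joinCols.measurable
  rw [h1, ← Measure.map_map hF hrot.measurable, hrot.map_eq, h2,
    ← Measure.map_map hG hsplit.measurable, hsplit.map_eq]
  -- Conditionally on the other columns `K`, almost surely of full rank, `F` has the gamma law.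
  have hcond : ∀ᵐ K ∂(Measure.pi fun _ : Fin MR => Measure.pi fun _ : Fin m => gaussianReal 0 1),
      (Measure.pi fun _ : Fin MR => gaussianReal 0 1).map (fun g => F (joinCols g K)) =
        gammaMeasure (((MR : ℝ) - ((m + 1 : ℕ) : ℝ) + 1) / 2) ((a ⬝ᵥ a) / (2 * P)) := by
    filter_upwards [ae_det_gram_ne_zero MR m (by omega)] with K hK
    have hpar : ((MR : ℝ) - ((m + 1 : ℕ) : ℝ) + 1) / 2 = ((MR : ℝ) - m) / 2 := by
      push_cast
      ring
    have hpar' : (a ⬝ᵥ a) / (2 * P) = 1 / (2 * c) := by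
      rw [hcdef]
      field_simp
    rw [hpar, hpar', ← map_normSq_colPerp (by omega) hK hc]
    refine Measure.map_congr ?_
    filter_upwards [ae_det_gram_joinCols_ne_zero (by omega) hK] with g hg
    have h3 := inv_gram_zero_zero_mul _ hg
    rw [hFdef]
    simp only
    rw [← div_div, ← hcdef, eq_inv_of_mul_eq_one_left h3, div_inv_eq_mul]
    rfl
  -- Integrate the conditional law, which does not depend on `K`, over `K`.
  clear_value F
  ext s hs
  rw [Measure.map_apply hG hs, Measure.prod_apply_symm (hG hs), lintegral_congr_ae
    (g := fun _ => gammaMeasure (((MR : ℝ) - ((m + 1 : ℕ) : ℝ) + 1) / 2) ((a ⬝ᵥ a) / (2 * P)) s)]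
  · simp
  · filter_upwards [hcond] with K hK
    have hGK : Measurable fun g : Fin MR → ℝ => F (joinCols g K) :=
      hF.comp (continuous_joinCols.measurable.comp (measurable_prodMk_right (y := K)))
    rw [← hK, Measure.map_apply hGK hs]
    rfl
end

section
/- Let M be a real n × n symmetric positive definite matrix, let a ∈ ℝ^n with a ≠ 0, let ε > 0, and set δ(ε) = ε · (aᵀ M⁻¹ (M + ε·I)⁻¹ a) / (aᵀ M⁻¹ a). Then 0 < δ(ε) < 1 and (aᵀ M⁻¹ a) / (aᵀ (ε·I + M)⁻¹ a) = 1 + Σ_{k=1}^∞ δ(ε)^k = 1/(1 − δ(ε)). -/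
/-!
Write `N = M + εI`, `p = aᵀM⁻¹a`, `q = aᵀN⁻¹a` and `r = aᵀM⁻¹N⁻¹a`. The resolvent identity
`M⁻¹ - N⁻¹ = ε M⁻¹N⁻¹` gives `p - q = ε r`, so `1 - δ = q / p`. The matrices `M⁻¹`, `N⁻¹` and
`M⁻¹N⁻¹ = (M² + εM)⁻¹` are all positive definite, so `p, q, r > 0`; hence `0 < δ < 1`, and the
rest is the geometric series.
-/

open Matrix

/-- For a real symmetric positive definite `n × n` matrix `M`, a nonzero
vector `a ∈ ℝ^n` and `ε > 0`, setting
`δ(ε) = ε · (aᵀ M⁻¹ (M + ε·I)⁻¹ a) / (aᵀ M⁻¹ a)`, one has `0 < δ(ε) < 1` and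
`(aᵀ M⁻¹ a) / (aᵀ (ε·I + M)⁻¹ a) = 1 + Σ_{k≥1} δ(ε)^k = 1/(1 − δ(ε))`. -/
theorem quadratic_form_ratio_geometric_series {n : ℕ}
    (M : Matrix (Fin n) (Fin n) ℝ) (hM : M.PosDef) (hMsymm : M.IsSymm)
    (a : Fin n → ℝ) (ha : a ≠ 0) (ε : ℝ) (hε : 0 < ε)
    (δ : ℝ)
    (hδ : δ = ε * (a ⬝ᵥ ((M⁻¹ * (M + ε • (1 : Matrix (Fin n) (Fin n) ℝ))⁻¹) *ᵥ a)) /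
        (a ⬝ᵥ (M⁻¹ *ᵥ a))) :
    0 < δ ∧ δ < 1 ∧
    (a ⬝ᵥ (M⁻¹ *ᵥ a)) / (a ⬝ᵥ ((ε • (1 : Matrix (Fin n) (Fin n) ℝ) + M)⁻¹ *ᵥ a)) =
      1 + ∑' k : ℕ, δ ^ (k + 1) ∧
    1 + ∑' k : ℕ, δ ^ (k + 1) = 1 / (1 - δ) := by
  have pos : ∀ A : Matrix (Fin n) (Fin n) ℝ, A.PosDef → 0 < a ⬝ᵥ (A *ᵥ a) := fun A hA => by
    simpa using hA.dotProduct_mulVec_pos ha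
  rw [add_comm (ε • (1 : Matrix (Fin n) (Fin n) ℝ)) M]
  set N := M + ε • (1 : Matrix (Fin n) (Fin n) ℝ) with hN
  have hNpd : N.PosDef := hM.add (PosDef.one.smul hε)
  have hprod : (M⁻¹ * N⁻¹).PosDef := by
    rw [← Matrix.mul_inv_rev]
    have hNM : N * M = Mᴴ * M + ε • M := by
      rw [hN, add_mul, smul_mul_assoc, one_mul, hM.isHermitian.eq]
    rw [hNM]
    exact (PosDef.posSemidef_add (posSemidef_conjTranspose_mul_self M) (hM.smul hε)).inv
  have hp := pos _ hM.inv
  have hq := pos _ hNpd.inv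
  have hr := pos _ hprod
  have hres : M⁻¹ = N⁻¹ + ε • (M⁻¹ * N⁻¹) := by
    have hMu : M⁻¹ * M = 1 := nonsing_inv_mul _ ((isUnit_iff_isUnit_det _).1 hM.isUnit)
    have hNu : N * N⁻¹ = 1 := mul_nonsing_inv _ ((isUnit_iff_isUnit_det _).1 hNpd.isUnit)
    calc M⁻¹ = M⁻¹ * (N * N⁻¹) := by rw [hNu, mul_one]
      _ = (M⁻¹ * M + ε • M⁻¹) * N⁻¹ := by
        rw [← mul_assoc, hN, mul_add, mul_smul_comm, mul_one]
      _ = N⁻¹ + ε • (M⁻¹ * N⁻¹) := by rw [hMu, add_mul, one_mul, smul_mul_assoc]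
  have hpqr : a ⬝ᵥ (M⁻¹ *ᵥ a) = a ⬝ᵥ (N⁻¹ *ᵥ a) + ε * (a ⬝ᵥ ((M⁻¹ * N⁻¹) *ᵥ a)) := by
    conv_lhs => rw [hres]
    rw [add_mulVec, dotProduct_add, smul_mulVec, dotProduct_smul, smul_eq_mul]
  generalize a ⬝ᵥ (M⁻¹ *ᵥ a) = p at *
  generalize a ⬝ᵥ (N⁻¹ *ᵥ a) = q at *
  generalize a ⬝ᵥ ((M⁻¹ * N⁻¹) *ᵥ a) = r at *
  have h0 : 0 < δ := by rw [hδ]; positivity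
  have hsub : 1 - δ = q / p := by
    rw [hδ, eq_div_iff hp.ne', sub_mul, div_mul_cancel₀ _ hp.ne']
    linarith
  have h1 : δ < 1 := by
    have : 0 < q / p := by positivity
    linarith
  have hsum : 1 + ∑' k : ℕ, δ ^ (k + 1) = 1 / (1 - δ) := by
    have h := (summable_geometric_of_lt_one h0.le h1).tsum_eq_zero_add
    rw [tsum_geometric_of_lt_one h0.le h1, pow_zero] at h
    rw [← h, one_div]
  refine ⟨h0, h1, ?_, hsum⟩
  rw [hsum, hsub, one_div_div]
end

section
/- Let M be a real n × n symmetric positive definite matrix, let a ∈ ℝ^n with a ≠ 0, and let ε > 0 satisfy ε · trace(M⁻¹) < 1. Then (aᵀ M⁻¹ a) / (aᵀ (ε·I + M)⁻¹ a) ≤ 1 + Σ_{k=1}^∞ (ε · trace(M⁻¹))^k = 1/(1 − ε · trace(M⁻¹)). -/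
open Matrix

/-!
Write `t = trace M⁻¹` and `x = (ε I + M)⁻¹ a`, so that `a = ε x + M x`. With `s = x ⬝ᵥ x`,
`p = x ⬝ᵥ M x` and `q = x ⬝ᵥ M⁻¹ x`, the denominator is `ε s + p` and the numerator is
`ε² q + 2 ε s + p`. A positive semidefinite form is bounded by its trace
(`dotProduct_mulVec_le_trace_mul`), so `q ≤ t s`; positivity of the form `M⁻¹` at `x - t M x` then
gives `s ≤ t p`. These two bounds yield `(1 - ε t) (ε² q + 2 ε s + p) ≤ ε s + p`.
-/

/-- The Rayleigh quotient of a positive semidefinite matrix is at most its trace: writing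
`A = Bᵀ B`, this is Cauchy–Schwarz applied to each row of `B`. -/
theorem dotProduct_mulVec_le_trace_mul_s11 {n : ℕ} {A : Matrix (Fin n) (Fin n) ℝ}
    (hA : A.PosSemidef) (x : Fin n → ℝ) :
    x ⬝ᵥ (A *ᵥ x) ≤ A.trace * (x ⬝ᵥ x) := by
  obtain ⟨B, rfl⟩ : ∃ B : Matrix (Fin n) (Fin n) ℝ, A = Bᵀ * B := by
    open scoped MatrixOrder in
    obtain ⟨B, hB⟩ := CStarAlgebra.nonneg_iff_eq_star_mul_self.mp hA.nonneg
    exact ⟨B, by simpa [star_eq_conjTranspose] using hB⟩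
  have h1 : x ⬝ᵥ ((Bᵀ * B) *ᵥ x) = ∑ i, (∑ j, B i j * x j) ^ 2 := by
    rw [← mulVec_mulVec, dotProduct_mulVec, vecMul_transpose]
    simp [dotProduct, mulVec, sq]
  have h2 : (Bᵀ * B).trace = ∑ i, ∑ j, B i j ^ 2 := by
    rw [Finset.sum_comm]
    simp [trace, mul_apply, sq]
  have h3 : x ⬝ᵥ x = ∑ j, x j ^ 2 := by simp [dotProduct, sq]
  rw [h1, h2, h3, Finset.sum_mul]
  exact Finset.sum_le_sum fun i _ => Finset.sum_mul_sq_le_sq_mul_sq _ _ _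

/-- For a real symmetric positive definite `n × n` matrix `M`, a nonzero
vector `a ∈ ℝ^n` and `ε > 0` with `ε · trace(M⁻¹) < 1`,
`(aᵀ M⁻¹ a) / (aᵀ (ε·I + M)⁻¹ a) ≤ 1 + Σ_{k≥1} (ε · trace(M⁻¹))^k = 1/(1 − ε · trace(M⁻¹))`. -/
theorem quadratic_form_ratio_le_geometric_series {n : ℕ}
    (M : Matrix (Fin n) (Fin n) ℝ) (hM : M.PosDef) (hMsymm : M.IsSymm)
    (a : Fin n → ℝ) (ha : a ≠ 0) (ε : ℝ) (hε : 0 < ε)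
    (htr : ε * (M⁻¹).trace < 1) :
    (a ⬝ᵥ (M⁻¹ *ᵥ a)) / (a ⬝ᵥ ((ε • (1 : Matrix (Fin n) (Fin n) ℝ) + M)⁻¹ *ᵥ a)) ≤
      1 + ∑' k : ℕ, (ε * (M⁻¹).trace) ^ (k + 1) ∧
    1 + ∑' k : ℕ, (ε * (M⁻¹).trace) ^ (k + 1) = 1 / (1 - ε * (M⁻¹).trace) := by
  have ht : 0 < (M⁻¹).trace := by
    have : Nonempty (Fin n) := by
      by_contra h
      rw [not_nonempty_iff] at h
      exact ha (Subsingleton.elim _ _)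
    exact hM.inv.trace_pos
  have hpos : 0 < 1 - ε * (M⁻¹).trace := by linarith
  have hsum : 1 + ∑' k : ℕ, (ε * (M⁻¹).trace) ^ (k + 1) = 1 / (1 - ε * (M⁻¹).trace) := by
    have h0 : 0 ≤ ε * (M⁻¹).trace := by positivity
    have := (summable_geometric_of_lt_one h0 htr).tsum_eq_zero_add
    rw [tsum_geometric_of_lt_one h0 htr, pow_zero] at this
    rw [← this, one_div]
  refine ⟨?_, hsum⟩
  rw [hsum]
  have hN : (ε • (1 : Matrix (Fin n) (Fin n) ℝ) + M).PosDef :=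
    (PosDef.one.smul hε).add hM
  have hden : 0 < a ⬝ᵥ ((ε • (1 : Matrix (Fin n) (Fin n) ℝ) + M)⁻¹ *ᵥ a) := by
    simpa using hN.inv.dotProduct_mulVec_pos ha
  rw [div_le_div_iff₀ hden hpos, one_mul]
  have hMu : IsUnit M.det := (isUnit_iff_isUnit_det _).mp hM.isUnit
  have hNu := (isUnit_iff_isUnit_det _).mp hN.isUnit
  obtain ⟨x, hx⟩ : ∃ x, x = (ε • (1 : Matrix (Fin n) (Fin n) ℝ) + M)⁻¹ *ᵥ a := ⟨_, rfl⟩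
  have hax : a = ε • x + M *ᵥ x := by
    have : (ε • (1 : Matrix (Fin n) (Fin n) ℝ) + M) *ᵥ x = a := by
      rw [hx, mulVec_mulVec, mul_nonsing_inv _ hNu, one_mulVec]
    rw [← this, add_mulVec, smul_mulVec, one_mulVec]
  have hinv : M⁻¹ *ᵥ (M *ᵥ x) = x := by
    rw [mulVec_mulVec, nonsing_inv_mul _ hMu, one_mulVec]
  have hsym : (M *ᵥ x) ⬝ᵥ (M⁻¹ *ᵥ x) = x ⬝ᵥ x := by
    rw [dotProduct_mulVec, ← mulVec_transpose, transpose_nonsing_inv, hMsymm.eq, hinv]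
  -- The form `M⁻¹` on the span of `x` and `M x`.
  have hform : ∀ c d : ℝ, (c • x + d • (M *ᵥ x)) ⬝ᵥ (M⁻¹ *ᵥ (c • x + d • (M *ᵥ x))) =
      c ^ 2 * (x ⬝ᵥ (M⁻¹ *ᵥ x)) + 2 * c * d * (x ⬝ᵥ x) + d ^ 2 * (x ⬝ᵥ (M *ᵥ x)) := by
    intro c d
    simp only [mulVec_add, mulVec_smul, hinv, add_dotProduct, dotProduct_add, smul_dotProduct,
      dotProduct_smul, hsym, smul_eq_mul, dotProduct_comm (M *ᵥ x) x]
    ring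
  have hnum : a ⬝ᵥ (M⁻¹ *ᵥ a) =
      ε ^ 2 * (x ⬝ᵥ (M⁻¹ *ᵥ x)) + 2 * ε * (x ⬝ᵥ x) + x ⬝ᵥ (M *ᵥ x) := by
    have := hform ε 1
    rw [one_smul, ← hax] at this
    rw [this]; ring
  have hdx : a ⬝ᵥ x = ε * (x ⬝ᵥ x) + x ⬝ᵥ (M *ᵥ x) := by
    conv_lhs => rw [hax]
    rw [add_dotProduct, smul_dotProduct, smul_eq_mul, dotProduct_comm (M *ᵥ x) x]
  have hq := dotProduct_mulVec_le_trace_mul_s11 hM.inv.posSemidef x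
  have hq0 : 0 ≤ x ⬝ᵥ (M⁻¹ *ᵥ x) := by
    simpa using hM.inv.posSemidef.dotProduct_mulVec_nonneg x
  have hs0 : 0 ≤ x ⬝ᵥ x := by simpa using dotProduct_star_self_nonneg x
  have hc := hM.inv.posSemidef.dotProduct_mulVec_nonneg
    ((1 : ℝ) • x + (-(M⁻¹).trace) • (M *ᵥ x))
  rw [star_trivial, hform] at hc
  rw [← hx, hnum, hdx]
  generalize x ⬝ᵥ (M⁻¹ *ᵥ x) = q at *
  generalize x ⬝ᵥ (M *ᵥ x) = p at *
  generalize x ⬝ᵥ x = s at *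
  generalize (M⁻¹).trace = t at *
  have hs : s ≤ t * p := by
    refine le_of_mul_le_mul_left ?_ ht
    linarith
  have e1 : ε ^ 2 * q ≤ ε ^ 2 * (t * s) := by gcongr
  have e2 : ε * s ≤ ε * (t * p) := by gcongr
  have e3 : 0 ≤ ε ^ 2 * t * s := by positivity
  have e4 : 0 ≤ ε ^ 3 * t * q := by positivity
  linarith
end

section
/- For ε ∈ [0, 1/√2], the function ρ(ε) = (4/π) ∫₀^{π/4} [ F_φ( 2(1+cos 2t) · ((ε+1)/(2ε+1))² ) − F_φ(1) ] dt, where F_φ(x) = x/(x+1) for x ≥ 0 (the CDF of the F(2,2) distribution), satisfies the closed form ρ(ε) = 1/2 − (4(1+2ε)/(π·√(5+4ε(3+2ε)))) · arctan( (1+2ε)/√(5+4ε(3+2ε)) ). In particular, ρ(0) = 1/2 − (4/(√5·π))·arctan(1/√5). -/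
/-!
Since `2 (1 + cos 2t) = 4 cos² t`, the integrand with `k = ((ε+1)/(2ε+1))²` is
`1/2 - 1/(4 k cos² t + 1)`. Writing `s² = 4 k + 1`, the substitution `u = tan t` shows that
`t/2 - s⁻¹ arctan (tan t / s)` is a primitive on `[0, π/4]`, so the integral equals
`π/8 - s⁻¹ arctan s⁻¹` (`integral_F_sub_half`). The closed form is the case
`s = √(5 + 4ε(3+2ε)) / (1 + 2ε)`.
-/

open Real

lemma hasDerivAt_primitive {k s t : ℝ} (hk : 0 ≤ k) (hs : 0 < s) (hsk : s ^ 2 = 4 * k + 1)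
    (hc : cos t ≠ 0) :
    HasDerivAt (fun t => t / 2 - s⁻¹ * arctan (tan t / s))
      ((2 * (1 + cos (2 * t)) * k) / (2 * (1 + cos (2 * t)) * k + 1) - (1 : ℝ) / (1 + 1)) t := by
  have h := ((hasDerivAt_id t).div_const 2).sub
    ((((hasDerivAt_tan hc).div_const s).arctan).const_mul s⁻¹)
  refine h.congr_deriv ?_
  have hsin : sin t ^ 2 = 1 - cos t ^ 2 := sin_sq t
  have hden : 4 * cos t ^ 2 * k + 1 ≠ 0 := by positivity
  have key : s⁻¹ * (1 / (1 + (tan t / s) ^ 2) * (1 / cos t ^ 2 / s))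
      = 1 / (4 * cos t ^ 2 * k + 1) := by
    have h1 : 1 + (tan t / s) ^ 2 = (4 * cos t ^ 2 * k + 1) / (s ^ 2 * cos t ^ 2) := by
      rw [tan_eq_sin_div_cos]
      field_simp
      rw [hsin, hsk]
      ring
    rw [h1]
    field_simp
  rw [key, cos_two_mul, show 2 * (1 + (2 * cos t ^ 2 - 1)) * k = 4 * cos t ^ 2 * k by ring]
  field_simp
  ring

lemma integral_F_sub_half {k s : ℝ} (hk : 0 ≤ k) (hs : 0 < s) (hsk : s ^ 2 = 4 * k + 1) :
    ∫ t in (0 : ℝ)..(π / 4),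
      ((2 * (1 + cos (2 * t)) * k) / (2 * (1 + cos (2 * t)) * k + 1) - (1 : ℝ) / (1 + 1)) =
      π / 8 - s⁻¹ * arctan s⁻¹ := by
  have hpi := pi_pos
  rw [intervalIntegral.integral_eq_sub_of_hasDerivAt
    (f := fun t => t / 2 - s⁻¹ * arctan (tan t / s))]
  · simp only [tan_pi_div_four, tan_zero, zero_div, arctan_zero, one_div]
    ring
  · intro t ht
    rw [Set.uIcc_of_le (by positivity)] at ht
    exact hasDerivAt_primitive hk hs hsk
      (cos_pos_of_mem_Ioo ⟨by linarith [ht.1], by linarith [ht.2]⟩).ne'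
  · refine Continuous.intervalIntegrable ?_ _ _
    refine Continuous.sub (Continuous.div (by fun_prop) (by fun_prop) fun t => ?_) continuous_const
    have : 0 ≤ 1 + cos (2 * t) := by linarith [neg_one_le_cos (2 * t)]
    positivity

/-- For `ε ∈ [0, 1/√2]`, the quantity
`ρ(ε) = (4/π) ∫₀^{π/4} [F_φ(2(1+cos 2t)·((ε+1)/(2ε+1))²) − F_φ(1)] dt`, with
`F_φ(x) = x/(x+1)` the CDF of the `F(2,2)` distribution, has the closed form
`ρ(ε) = 1/2 − (4(1+2ε)/(π√(5+4ε(3+2ε)))) · arctan((1+2ε)/√(5+4ε(3+2ε)))`.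
In particular `ρ(0) = 1/2 − (4/(√5·π))·arctan(1/√5)`. -/
theorem rho_closed_form :
    (∀ ε ∈ Set.Icc (0 : ℝ) (1 / Real.sqrt 2),
      (4 / π) * ∫ t in (0 : ℝ)..(π / 4),
          ((2 * (1 + Real.cos (2 * t)) * ((ε + 1) / (2 * ε + 1)) ^ 2) /
              (2 * (1 + Real.cos (2 * t)) * ((ε + 1) / (2 * ε + 1)) ^ 2 + 1) -
            (1 : ℝ) / (1 + 1)) =
        1 / 2 - (4 * (1 + 2 * ε) / (π * Real.sqrt (5 + 4 * ε * (3 + 2 * ε)))) *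
          Real.arctan ((1 + 2 * ε) / Real.sqrt (5 + 4 * ε * (3 + 2 * ε)))) ∧
    (4 / π) * (∫ t in (0 : ℝ)..(π / 4),
        ((2 * (1 + Real.cos (2 * t)) * ((0 + 1) / (2 * 0 + 1) : ℝ) ^ 2) /
            (2 * (1 + Real.cos (2 * t)) * ((0 + 1) / (2 * 0 + 1) : ℝ) ^ 2 + 1) -
          (1 : ℝ) / (1 + 1))) =
      1 / 2 - (4 / (Real.sqrt 5 * π)) * Real.arctan (1 / Real.sqrt 5) := by
  have main : ∀ ε : ℝ, 0 ≤ ε →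
      (4 / π) * ∫ t in (0 : ℝ)..(π / 4),
          ((2 * (1 + Real.cos (2 * t)) * ((ε + 1) / (2 * ε + 1)) ^ 2) /
              (2 * (1 + Real.cos (2 * t)) * ((ε + 1) / (2 * ε + 1)) ^ 2 + 1) -
            (1 : ℝ) / (1 + 1)) =
        1 / 2 - (4 * (1 + 2 * ε) / (π * Real.sqrt (5 + 4 * ε * (3 + 2 * ε)))) *
          Real.arctan ((1 + 2 * ε) / Real.sqrt (5 + 4 * ε * (3 + 2 * ε))) := by
    intro ε hε
    have hr : 0 < √(5 + 4 * ε * (3 + 2 * ε)) := by positivity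
    have hsq : √(5 + 4 * ε * (3 + 2 * ε)) ^ 2 = 5 + 4 * ε * (3 + 2 * ε) :=
      sq_sqrt (by positivity)
    have hs : (√(5 + 4 * ε * (3 + 2 * ε)) / (1 + 2 * ε)) ^ 2 =
        4 * ((ε + 1) / (2 * ε + 1)) ^ 2 + 1 := by
      rw [div_pow, hsq, add_comm (2 * ε) 1]
      field_simp
      ring
    rw [integral_F_sub_half (by positivity) (by positivity) hs, inv_div]
    have hpi := pi_pos
    field_simp
    ring
  refine ⟨fun ε hε => main ε hε.1, ?_⟩
  have h0 := main 0 le_rfl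
  rw [h0]
  norm_num [mul_comm]
end
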